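/- Define g(x) = x^{-1/2} (1 + log(2/x))^{-4} sin(1/x) for 0 < x < 1. Then the double integral ∫_0^1 ∫_0^1 [g(x) - g(y)]² · |x-y|^{-1} · (log|log(1/|x-y|)|)² dx dy is finite. -/

import Mathlib

open MeasureTheory Set

/-! Write `g(x) = A(x) φ(1/x)` with amplitude `A(x) = x^{-1/2} (1 + log (2/x))^{-k}`, where `k = 4`
and `φ = sin`. For `x < y` and `d = y - x`, the amplitude varies slowly and `φ(1/x)` is Lipschitz at
scale `x²`, so `|g y - g x| ≤ C A(x) min(1, d/x²)`. The factor `min(1, d/x²)` lets one trade powers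
of `1 + log (1/d)` for powers of `1 + log (1/x)`, and `A(x)²` has logarithms to spare:
`A(x)² min(1, d/x²) ≤ C / (x (1 + log (1/x))²) / (1 + log (1/d))³`. Up to a constant, the integrand
is thus at most `a(x) b(y - x)`, where both `a(x) = 1 / (x (1 + log (1/x))²)` and
`b(d) = (log |log d|)² / (d (1 + log (1/d))³)` are integrable on `(0, 1)`. -/

section

open Real Filter Topology NNReal

/-! ### Logarithms -/

lemma one_add_log_pow_le (n : ℕ) {r : ℝ} (hr : 1 ≤ r) : (1 + log r) ^ n ≤ n ^ n * r := by
  rcases n.eq_zero_or_pos with rfl | hn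
  · simpa using hr
  have hn1 : (1 : ℝ) ≤ n := by exact_mod_cast hn
  have hlog : 0 ≤ log r := log_nonneg hr
  have hbase : 1 + log r ≤ n * exp (log r / n) :=
    calc 1 + log r ≤ n * (log r / n + 1) := by
          rw [mul_add, mul_div_cancel₀ _ (by positivity)]; linarith
      _ ≤ n * exp (log r / n) := by gcongr; exact add_one_le_exp _
  calc (1 + log r) ^ n ≤ (n * exp (log r / n)) ^ n := by gcongr
    _ = n ^ n * r := by
      rw [mul_pow, ← exp_nat_mul, mul_div_cancel₀ _ (by positivity), exp_log (by linarith)]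

lemma one_add_log_pow_le_sqrt (n : ℕ) {r : ℝ} (hr : 1 ≤ r) :
    (1 + log r) ^ n ≤ (2 * n) ^ n * √r := by
  have hlog : 0 ≤ log r := log_nonneg hr
  calc (1 + log r) ^ n ≤ (2 * (1 + log √r)) ^ n := by
        rw [log_sqrt (by linarith)]; gcongr; linarith
    _ = 2 ^ n * (1 + log √r) ^ n := mul_pow _ _ _
    _ ≤ 2 ^ n * (n ^ n * √r) := by gcongr; exact one_add_log_pow_le n (one_le_sqrt.2 hr)
    _ = (2 * n) ^ n * √r := by rw [mul_pow, mul_assoc]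

lemma one_le_one_sub_log {t : ℝ} (h0 : 0 ≤ t) (h1 : t ≤ 1) : 1 ≤ 1 - log t := by
  linarith [log_nonpos h0 h1]

lemma one_sub_log_div_le_mul {a r : ℝ} (ha0 : 0 < a) (ha1 : a ≤ 1) (hr : 1 ≤ r) :
    1 - log (a / r) ≤ (1 - log a) * (1 + log r) := by
  rw [log_div ha0.ne' (by linarith)]
  nlinarith [mul_nonneg (neg_nonneg.2 (log_nonpos ha0.le ha1)) (log_nonneg hr)]

lemma min_one_div_mul_one_sub_log_pow_le (n : ℕ) {a d : ℝ} (ha0 : 0 < a) (ha1 : a ≤ 1)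
    (hd0 : 0 < d) (hd1 : d ≤ 1) :
    min 1 (d / a) * (1 - log d) ^ n ≤ n ^ n * (1 - log a) ^ n := by
  have hM := one_le_one_sub_log hd0.le hd1
  have hMa := one_le_one_sub_log ha0.le ha1
  set m := min 1 (d / a)
  have hm0 : 0 < m := lt_min one_pos (by positivity)
  have hm1 : 1 ≤ m⁻¹ := (one_le_inv₀ hm0).2 (min_le_left _ _)
  have hmd : a / m⁻¹ ≤ d := by
    rw [div_inv_eq_mul, mul_comm, ← le_div_iff₀ ha0]; exact min_le_right _ _
  have hlog : 1 - log d ≤ (1 - log a) * (1 + log m⁻¹) :=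
    (sub_le_sub_left (log_le_log (by positivity) hmd) 1).trans
      (one_sub_log_div_le_mul ha0 ha1 hm1)
  calc m * (1 - log d) ^ n ≤ m * ((1 - log a) * (1 + log m⁻¹)) ^ n := by gcongr
    _ = m * ((1 - log a) ^ n * (1 + log m⁻¹) ^ n) := by rw [mul_pow]
    _ ≤ m * ((1 - log a) ^ n * (n ^ n * m⁻¹)) := by gcongr; exact one_add_log_pow_le n hm1
    _ = n ^ n * (1 - log a) ^ n := by field_simp

/-! ### The amplitude -/

/-- The amplitude `x^{-1/2} (1 + log (2/x))^{-k}` of the oscillating function. The logarithm is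
written as `-log (x/2)`. -/
noncomputable def logAmplitude (k : ℕ) (x : ℝ) : ℝ := (√x)⁻¹ * ((1 - log (x / 2)) ^ k)⁻¹

section logAmplitude

variable (k : ℕ) {x y : ℝ}

lemma logAmplitude_nonneg (hx0 : 0 ≤ x) (hx2 : x ≤ 2) : 0 ≤ logAmplitude k x := by
  have hL : 1 ≤ 1 - log (x / 2) := one_le_one_sub_log (by linarith) (by linarith)
  unfold logAmplitude
  positivity

lemma logAmplitude_le_mul (hx : 0 < x) (hxy : x ≤ y) (hy : y ≤ 2) :
    logAmplitude k y ≤ (2 * k) ^ k * logAmplitude k x := by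
  have hy0 : 0 < y := hx.trans_le hxy
  have hLx : 1 ≤ 1 - log (x / 2) := one_le_one_sub_log (by linarith) (by linarith)
  have hLy : 1 ≤ 1 - log (y / 2) := one_le_one_sub_log (by linarith) (by linarith)
  have hr : 1 ≤ y / x := (one_le_div hx).2 hxy
  have hL : 1 - log (x / 2) ≤ (1 - log (y / 2)) * (1 + log (y / x)) := by
    have := one_sub_log_div_le_mul (a := y / 2) (by linarith) (by linarith) hr
    rwa [show y / 2 / (y / x) = x / 2 by field_simp] at this
  have hpow : √x * (1 - log (x / 2)) ^ k ≤ (2 * k) ^ k * (√y * (1 - log (y / 2)) ^ k) :=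
    calc √x * (1 - log (x / 2)) ^ k
        ≤ √x * ((1 - log (y / 2)) * (1 + log (y / x))) ^ k := by gcongr
      _ = √x * ((1 - log (y / 2)) ^ k * (1 + log (y / x)) ^ k) := by rw [mul_pow]
      _ ≤ √x * ((1 - log (y / 2)) ^ k * ((2 * k) ^ k * √(y / x))) := by
        gcongr; exact one_add_log_pow_le_sqrt k hr
      _ = (2 * k) ^ k * (√y * (1 - log (y / 2)) ^ k) := by
        rw [sqrt_div hy0.le]; field_simp
  unfold logAmplitude
  rw [← mul_inv, ← mul_inv, ← div_eq_mul_inv, inv_eq_one_div,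
    div_le_div_iff₀ (by positivity) (by positivity), one_mul]
  exact hpow

lemma hasDerivAt_logAmplitude (hx0 : 0 < x) (hx2 : x ≤ 2) :
    HasDerivAt (logAmplitude k) (logAmplitude k x / x * (k / (1 - log (x / 2)) - 1 / 2)) x := by
  have hL : 0 < 1 - log (x / 2) :=
    one_pos.trans_le (one_le_one_sub_log (by linarith) (by linarith))
  have hlog : HasDerivAt (fun t => 1 - log (t / 2)) (-(1 / 2 / (x / 2))) x :=
    (((hasDerivAt_id x).div_const 2).log (by positivity)).const_sub 1
  have hsqrt : HasDerivAt (fun t => (√t)⁻¹) (-(1 / (2 * √x)) / √x ^ 2) x :=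
    (hasDerivAt_sqrt hx0.ne').fun_inv (by positivity)
  refine (hsqrt.fun_mul ((hlog.fun_pow k).fun_inv (by positivity))).congr_deriv ?_
  unfold logAmplitude
  rw [sq_sqrt hx0.le]
  rcases k with _ | k
  · field_simp
    norm_num
  · simp only [Nat.add_sub_cancel]
    field_simp
    ring

lemma abs_logAmplitude_sub_le (hx : 0 < x) (hxy : x ≤ y) (hy : y ≤ 2) :
    |logAmplitude k y - logAmplitude k x| ≤
      (k + 1) * (2 * k) ^ k * logAmplitude k x * ((y - x) / x) := by
  have hderiv : ∀ t ∈ Icc x y, HasDerivWithinAt (logAmplitude k)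
      (logAmplitude k t / t * (k / (1 - log (t / 2)) - 1 / 2)) (Icc x y) t := fun t ht =>
    (hasDerivAt_logAmplitude k (hx.trans_le ht.1) (ht.2.trans hy)).hasDerivWithinAt
  have hbound : ∀ t ∈ Icc x y, ‖logAmplitude k t / t * (k / (1 - log (t / 2)) - 1 / 2)‖ ≤
      (2 * k) ^ k * logAmplitude k x / x * (k + 1) := fun t ⟨hxt, hty⟩ => by
    have ht : 0 < t := hx.trans_le hxt
    have hL : 1 ≤ 1 - log (t / 2) := one_le_one_sub_log (by linarith) (by linarith)
    have hA : 0 ≤ logAmplitude k t := logAmplitude_nonneg k ht.le (by linarith)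
    have hAx : 0 ≤ logAmplitude k x := logAmplitude_nonneg k hx.le (by linarith)
    have hfactor : |k / (1 - log (t / 2)) - 1 / 2| ≤ (k : ℝ) + 1 := by
      have h0 : 0 ≤ k / (1 - log (t / 2)) := by positivity
      have h1 : k / (1 - log (t / 2)) ≤ (k : ℝ) := div_le_self (by positivity) hL
      rw [abs_le]
      constructor <;> linarith
    rw [norm_mul, norm_of_nonneg (by positivity), norm_eq_abs]
    gcongr
    exact logAmplitude_le_mul k hx hxt (by linarith)
  calc |logAmplitude k y - logAmplitude k x|
      ≤ (2 * k) ^ k * logAmplitude k x / x * (k + 1) * ‖y - x‖ :=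
        (convex_Icc x y).norm_image_sub_le_of_norm_hasDerivWithin_le hderiv hbound
          (left_mem_Icc.2 hxy) (right_mem_Icc.2 hxy)
    _ = (k + 1) * (2 * k) ^ k * logAmplitude k x * ((y - x) / x) := by
      rw [norm_of_nonneg (by linarith)]; ring

end logAmplitude

section oscillation

variable (k : ℕ) {φ : ℝ → ℝ} {B : ℝ} {K : ℝ≥0} {x y : ℝ}

lemma abs_logAmplitude_mul_sub_le_of_bounded (hφ : ∀ u, |φ u| ≤ B) (hx : 0 < x) (hxy : x ≤ y)
    (hy : y ≤ 2) :
    |logAmplitude k y * φ (1 / y) - logAmplitude k x * φ (1 / x)| ≤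
      ((2 * k) ^ k + 1) * B * logAmplitude k x := by
  have hAx : 0 ≤ logAmplitude k x := logAmplitude_nonneg k hx.le (by linarith)
  have hAy : 0 ≤ logAmplitude k y := logAmplitude_nonneg k (by linarith) hy
  calc |logAmplitude k y * φ (1 / y) - logAmplitude k x * φ (1 / x)|
      ≤ |logAmplitude k y * φ (1 / y)| + |logAmplitude k x * φ (1 / x)| := abs_sub _ _
    _ = logAmplitude k y * |φ (1 / y)| + logAmplitude k x * |φ (1 / x)| := by
      rw [abs_mul, abs_mul, abs_of_nonneg hAx, abs_of_nonneg hAy]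
    _ ≤ (2 * k) ^ k * logAmplitude k x * B + logAmplitude k x * B := by
      gcongr
      exacts [logAmplitude_le_mul k hx hxy hy, hφ _, hφ _]
    _ = ((2 * k) ^ k + 1) * B * logAmplitude k x := by ring

lemma abs_logAmplitude_mul_sub_le_of_lipschitz (hφ : ∀ u, |φ u| ≤ B) (hφK : LipschitzWith K φ)
    (hx : 0 < x) (hxy : x ≤ y) (hy : y ≤ 1) :
    |logAmplitude k y * φ (1 / y) - logAmplitude k x * φ (1 / x)| ≤
      ((k + 1) * (2 * k) ^ k * B + K) * logAmplitude k x * ((y - x) / x ^ 2) := by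
  have hy0 : 0 < y := hx.trans_le hxy
  have : 0 ≤ y - x := by linarith
  have hAx : 0 ≤ logAmplitude k x := logAmplitude_nonneg k hx.le (by linarith)
  have hamplitude : |logAmplitude k y - logAmplitude k x| ≤
      (k + 1) * (2 * k) ^ k * logAmplitude k x * ((y - x) / x ^ 2) := by
    refine (abs_logAmplitude_sub_le k hx hxy (by linarith)).trans ?_
    gcongr
    nlinarith
  have hphase : |φ (1 / y) - φ (1 / x)| ≤ K * ((y - x) / x ^ 2) :=
    calc |φ (1 / y) - φ (1 / x)| ≤ K * |1 / y - 1 / x| := hφK.dist_le_mul _ _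
      _ = K * ((y - x) / (x * y)) := by
        rw [abs_sub_comm, div_sub_div _ _ hx.ne' hy0.ne', one_mul, mul_one,
          abs_of_nonneg (by positivity)]
      _ ≤ K * ((y - x) / x ^ 2) := by gcongr; nlinarith
  calc |logAmplitude k y * φ (1 / y) - logAmplitude k x * φ (1 / x)|
      = |(logAmplitude k y - logAmplitude k x) * φ (1 / y) +
          logAmplitude k x * (φ (1 / y) - φ (1 / x))| := by congr 1; ring
    _ ≤ |logAmplitude k y - logAmplitude k x| * |φ (1 / y)| +
          logAmplitude k x * |φ (1 / y) - φ (1 / x)| := by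
      refine (abs_add_le _ _).trans_eq ?_
      rw [abs_mul, abs_mul, abs_of_nonneg hAx]
    _ ≤ (k + 1) * (2 * k) ^ k * logAmplitude k x * ((y - x) / x ^ 2) * B +
          logAmplitude k x * (K * ((y - x) / x ^ 2)) := by gcongr; exact hφ _
    _ = ((k + 1) * (2 * k) ^ k * B + K) * logAmplitude k x * ((y - x) / x ^ 2) := by ring

/-- The constant in the oscillation bound for `logAmplitude k x * φ (1 / x)`, where `|φ| ≤ B` and
`φ` is `K`-Lipschitz. It dominates both the constant of the bound that uses only `|φ| ≤ B` and that
of the Lipschitz bound. -/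
noncomputable def oscillationConst (k : ℕ) (B : ℝ) (K : ℝ≥0) : ℝ :=
  ((k + 1) * (2 * k) ^ k + 1) * B + K

lemma logAmplitude_mul_sub_sq_le (hφ : ∀ u, |φ u| ≤ B) (hφK : LipschitzWith K φ)
    (hx : 0 < x) (hxy : x ≤ y) (hy : y ≤ 1) :
    (logAmplitude k y * φ (1 / y) - logAmplitude k x * φ (1 / x)) ^ 2 ≤
      (oscillationConst k B K * logAmplitude k x) ^ 2 * min 1 ((y - x) / x ^ 2) := by
  have hB : 0 ≤ B := (abs_nonneg _).trans (hφ 0)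
  have hA : 0 ≤ logAmplitude k x := logAmplitude_nonneg k hx.le (by linarith)
  have hρ : 0 ≤ (y - x) / x ^ 2 := div_nonneg (by linarith) (by positivity)
  have hm0 : 0 ≤ min 1 ((y - x) / x ^ 2) := le_min zero_le_one hρ
  have hC : 0 ≤ oscillationConst k B K := by unfold oscillationConst; positivity
  have hCbounded : ((2 * k) ^ k + 1) * B ≤ oscillationConst k B K := by
    have : 0 ≤ k * (2 * k : ℝ) ^ k * B + K := by positivity
    unfold oscillationConst
    linarith
  have hClipschitz : (k + 1) * (2 * k) ^ k * B + K ≤ oscillationConst k B K := by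
    unfold oscillationConst
    linarith
  have habs : |logAmplitude k y * φ (1 / y) - logAmplitude k x * φ (1 / x)| ≤
      oscillationConst k B K * logAmplitude k x * min 1 ((y - x) / x ^ 2) := by
    rw [mul_min_of_nonneg _ _ (by positivity), mul_one]
    refine le_min ?_ ?_
    · exact (abs_logAmplitude_mul_sub_le_of_bounded k hφ hx hxy (by linarith)).trans (by gcongr)
    · exact (abs_logAmplitude_mul_sub_le_of_lipschitz k hφ hφK hx hxy hy).trans (by gcongr)
  calc (logAmplitude k y * φ (1 / y) - logAmplitude k x * φ (1 / x)) ^ 2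
      ≤ (oscillationConst k B K * logAmplitude k x * min 1 ((y - x) / x ^ 2)) ^ 2 :=
        sq_le_sq' (neg_le_of_abs_le habs) (le_of_abs_le habs)
    _ = (oscillationConst k B K * logAmplitude k x) ^ 2 * min 1 ((y - x) / x ^ 2) ^ 2 :=
        mul_pow _ _ _
    _ ≤ (oscillationConst k B K * logAmplitude k x) ^ 2 * min 1 ((y - x) / x ^ 2) := by
      gcongr
      exact pow_le_of_le_one hm0 (min_le_left _ _) two_ne_zero

end oscillation

/-! ### Two integrable densities on the unit interval -/

/-- The density `1 / (t (1 + log (1/t))²)`, the derivative of `1 / (1 + log (1/t))`. It controls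
the dependence of the integrand on the smaller of the two variables. -/
noncomputable def logDensity (t : ℝ) : ℝ := (t * (1 - log t) ^ 2)⁻¹

/-- The density `(log |log d|)² / (d (1 + log (1/d))³)`. It controls the dependence of the
integrand on the distance `d` of the two variables. -/
noncomputable def logLogDensity (d : ℝ) : ℝ := (d * (1 - log d) ^ 3)⁻¹ * log |log d| ^ 2

lemma logDensity_nonneg {t : ℝ} (ht : 0 ≤ t) : 0 ≤ logDensity t := by
  unfold logDensity; positivity

lemma logLogDensity_nonneg {d : ℝ} (hd0 : 0 ≤ d) (hd1 : d ≤ 1) : 0 ≤ logLogDensity d := by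
  have hM := one_le_one_sub_log hd0 hd1
  unfold logLogDensity; positivity

lemma logAmplitude_sq_mul_one_sub_log_pow_le {k : ℕ} (hk : 3 ≤ k) {x : ℝ} (hx0 : 0 < x)
    (hx1 : x ≤ 1) : logAmplitude k x ^ 2 * (1 - log x) ^ 3 ≤ logDensity x := by
  have hM : 1 ≤ 1 - log x := one_le_one_sub_log hx0.le hx1
  have hL : 1 - log x ≤ 1 - log (x / 2) :=
    sub_le_sub_left (log_le_log (by positivity) (by linarith)) 1
  have hpow : (1 - log x) ^ 5 ≤ (1 - log (x / 2)) ^ (2 * k) :=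
    calc (1 - log x) ^ 5 ≤ (1 - log x) ^ (2 * k) := pow_le_pow_right₀ hM (by omega)
      _ ≤ (1 - log (x / 2)) ^ (2 * k) := by gcongr
  calc logAmplitude k x ^ 2 * (1 - log x) ^ 3
      = x⁻¹ * ((1 - log (x / 2)) ^ (2 * k))⁻¹ * (1 - log x) ^ 3 := by
        rw [logAmplitude, mul_pow, inv_pow, sq_sqrt hx0.le, inv_pow, ← pow_mul, mul_comm k]
    _ ≤ x⁻¹ * ((1 - log x) ^ 5)⁻¹ * (1 - log x) ^ 3 := by gcongr
    _ = logDensity x := by unfold logDensity; field_simp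

lemma integrableOn_Ioo_of_hasDerivAt_of_nonneg_of_tendsto {f f' : ℝ → ℝ} {a b la lb : ℝ}
    (hf : ∀ t ∈ Ioo a b, HasDerivAt f (f' t) t) (hf' : ∀ t ∈ Ioo a b, 0 ≤ f' t)
    (ha : Tendsto f (𝓝[>] a) (𝓝 la)) (hb : Tendsto f (𝓝[<] b) (𝓝 lb)) :
    IntegrableOn f' (Ioo a b) := by
  have hcont : ContinuousOn f (Ioo a b) := fun t ht => (hf t ht).continuousAt.continuousWithinAt
  have heq : EqOn (extendFrom (Ioo a b) f) f (Ioo a b) := extendFrom_extends hcont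
  refine (intervalIntegral.integrableOn_deriv_of_nonneg
    (continuousOn_Icc_extendFrom_Ioo hcont ha hb) (fun t ht => ?_) hf').mono_set Ioo_subset_Ioc_self
  exact (hf t ht).congr_of_eventuallyEq (heq.eventuallyEq_of_mem (isOpen_Ioo.mem_nhds ht))

lemma integrableOn_logDensity : IntegrableOn logDensity (Ioo 0 1) := by
  refine integrableOn_Ioo_of_hasDerivAt_of_nonneg_of_tendsto (f := fun t => (1 - log t)⁻¹)
    (la := 0) (lb := (1 - log 1)⁻¹) (fun t ⟨h0, h1⟩ => ?_)
    (fun t ht => logDensity_nonneg ht.1.le) ?_ ?_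
  · have hM : 1 ≤ 1 - log t := one_le_one_sub_log h0.le h1.le
    refine (((hasDerivAt_log h0.ne').const_sub 1).fun_inv (by positivity)).congr_deriv ?_
    rw [logDensity, mul_inv, neg_neg, div_eq_mul_inv]
  · refine Tendsto.inv_tendsto_atTop ?_
    simp only [sub_eq_add_neg]
    exact tendsto_atTop_add_const_left _ _ (tendsto_neg_atBot_atTop.comp tendsto_log_nhdsGT_zero)
  · have hcont : ContinuousAt (fun t => (1 - log t)⁻¹) 1 :=
      (continuousAt_const.sub (continuousAt_log one_ne_zero)).inv₀ (by simp)
    exact hcont.tendsto.mono_left nhdsWithin_le_nhds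

lemma logLogDensity_le_of_one_le_abs_log {d : ℝ} (hd0 : 0 < d) (hd1 : d ≤ 1) (h : 1 ≤ |log d|) :
    logLogDensity d ≤ 4 * logDensity d := by
  have hM : 1 ≤ 1 - log d := one_le_one_sub_log hd0.le hd1
  have habs : |log d| = -log d := abs_of_nonpos (log_nonpos hd0.le hd1)
  have hloglog : log |log d| ^ 2 ≤ 4 * (1 - log d) :=
    calc log |log d| ^ 2 ≤ (1 + log |log d|) ^ 2 := by
          gcongr
          · exact log_nonneg h
          · linarith
      _ ≤ 4 * |log d| := by simpa using (one_add_log_pow_le 2 h).trans_eq (by norm_num)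
      _ ≤ 4 * (1 - log d) := by linarith
  calc logLogDensity d ≤ (d * (1 - log d) ^ 3)⁻¹ * (4 * (1 - log d)) := by
        unfold logLogDensity; gcongr
    _ = 4 * logDensity d := by unfold logDensity; field_simp

lemma logLogDensity_le_of_abs_log_le_one {d : ℝ} (hd0 : 0 < d) (hd1 : d < 1) (h : |log d| ≤ 1) :
    logLogDensity d ≤ 3 * (4 ^ 4 * logDensity (1 - d)) := by
  have hM : 1 ≤ 1 - log d := one_le_one_sub_log hd0.le hd1.le
  have habs : |log d| = -log d := abs_of_nonpos (log_nonpos hd0.le hd1.le)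
  have hu : 0 < 1 - d := by linarith
  have hMu : 1 ≤ 1 - log (1 - d) := one_le_one_sub_log hu.le (by linarith)
  have hinv : (d * (1 - log d) ^ 3)⁻¹ ≤ 3 :=
    calc (d * (1 - log d) ^ 3)⁻¹ ≤ d⁻¹ := by
          gcongr; exact le_mul_of_one_le_right hd0.le (one_le_pow₀ hM)
      _ = exp |log d| := by rw [habs, exp_neg, exp_log hd0]
      _ ≤ exp 1 := exp_le_exp.2 h
      _ ≤ 3 := exp_one_lt_three.le
  have hloglog : log |log d| ^ 2 ≤ (1 - log (1 - d)) ^ 2 := by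
    have hle : 1 - d ≤ |log d| := by linarith [log_le_sub_one_of_pos hd0]
    have hmono : log (1 - d) ≤ log |log d| := log_le_log hu hle
    have hnonpos : log |log d| ≤ 0 := log_nonpos (abs_nonneg _) h
    exact sq_le_sq' (by linarith) (by linarith)
  have hdensity : (1 - log (1 - d)) ^ 2 ≤ 4 ^ 4 * logDensity (1 - d) :=
    calc (1 - log (1 - d)) ^ 2
        = (1 + log (1 - d)⁻¹) ^ 4 * ((1 - log (1 - d)) ^ 2)⁻¹ := by
          rw [log_inv, ← sub_eq_add_neg]; field_simp
      _ ≤ 4 ^ 4 * (1 - d)⁻¹ * ((1 - log (1 - d)) ^ 2)⁻¹ := by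
          gcongr
          exact_mod_cast one_add_log_pow_le 4 ((one_le_inv₀ hu).2 (by linarith))
      _ = 4 ^ 4 * logDensity (1 - d) := by rw [logDensity, mul_inv, mul_assoc]
  exact mul_le_mul hinv (hloglog.trans hdensity) (sq_nonneg _) (by norm_num)

lemma integrableOn_logLogDensity : IntegrableOn logLogDensity (Ioo 0 1) := by
  have hreflect : IntegrableOn (fun d => logDensity (1 - d)) (Ioo 0 1) := by
    rw [← intervalIntegrable_iff_integrableOn_Ioo_of_le zero_le_one]
    simpa using (((intervalIntegrable_iff_integrableOn_Ioo_of_le zero_le_one).2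
      integrableOn_logDensity).comp_sub_left 1).symm
  refine Integrable.mono' ((integrableOn_logDensity.const_mul 4).add
    ((hreflect.const_mul (4 ^ 4)).const_mul 3)) ?_ ?_
  · unfold logLogDensity
    exact Measurable.aestronglyMeasurable (by fun_prop)
  · filter_upwards [ae_restrict_mem measurableSet_Ioo] with d ⟨hd0, hd1⟩
    have hnn : 0 ≤ logDensity d := logDensity_nonneg hd0.le
    have hnn' : 0 ≤ logDensity (1 - d) := logDensity_nonneg (by linarith)
    rw [norm_of_nonneg (logLogDensity_nonneg hd0.le hd1.le), Pi.add_apply]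
    rcases le_total 1 |log d| with h | h
    · linarith [logLogDensity_le_of_one_le_abs_log hd0 hd1.le h]
    · linarith [logLogDensity_le_of_abs_log_le_one hd0 hd1 h]

/-! ### The double integral -/

lemma integrand_le_logDensity_mul_logLogDensity {k : ℕ} (hk : 3 ≤ k) {φ : ℝ → ℝ} {B : ℝ}
    {K : ℝ≥0} (hφ : ∀ u, |φ u| ≤ B) (hφK : LipschitzWith K φ) {x y : ℝ} (hx : 0 < x) (hxy : x < y)
    (hy : y < 1) :
    (logAmplitude k y * φ (1 / y) - logAmplitude k x * φ (1 / x)) ^ 2 * (y - x)⁻¹ *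
        log |log (1 / (y - x))| ^ 2 ≤
      6 ^ 3 * oscillationConst k B K ^ 2 * (logDensity x * logLogDensity (y - x)) := by
  have hosc := logAmplitude_mul_sub_sq_le k hφ hφK hx hxy.le hy.le
  have hd0 : 0 < y - x := by linarith
  have hd1 : y - x < 1 := by linarith
  have hx1 : x ≤ 1 := by linarith
  set d := y - x
  set C := oscillationConst k B K
  have hM : 1 ≤ 1 - log d := one_le_one_sub_log hd0.le hd1.le
  have hMx : 1 ≤ 1 - log x := one_le_one_sub_log hx.le hx1
  have hmin : min 1 (d / x ^ 2) ≤ 6 ^ 3 * (1 - log x) ^ 3 * ((1 - log d) ^ 3)⁻¹ := by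
    rw [← div_eq_mul_inv, le_div_iff₀ (by positivity)]
    calc min 1 (d / x ^ 2) * (1 - log d) ^ 3 ≤ 3 ^ 3 * (1 - log (x ^ 2)) ^ 3 := by
          exact_mod_cast min_one_div_mul_one_sub_log_pow_le 3 (by positivity)
            (pow_le_one₀ hx.le hx1) hd0 hd1.le
      _ ≤ 3 ^ 3 * (2 * (1 - log x)) ^ 3 := by
          have hlog : log (x ^ 2) = 2 * log x := by simp
          gcongr <;> linarith
      _ = 6 ^ 3 * (1 - log x) ^ 3 := by ring
  calc (logAmplitude k y * φ (1 / y) - logAmplitude k x * φ (1 / x)) ^ 2 * d⁻¹ *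
        log |log (1 / d)| ^ 2
      ≤ (C * logAmplitude k x) ^ 2 * (6 ^ 3 * (1 - log x) ^ 3 * ((1 - log d) ^ 3)⁻¹) * d⁻¹ *
          log |log (1 / d)| ^ 2 := by
        gcongr
        exact hosc.trans (by gcongr)
    _ = 6 ^ 3 * C ^ 2 * (logAmplitude k x ^ 2 * (1 - log x) ^ 3 * logLogDensity d) := by
        rw [one_div, log_inv, abs_neg, logLogDensity, mul_inv]; ring
    _ ≤ 6 ^ 3 * C ^ 2 * (logDensity x * logLogDensity d) := by
        gcongr
        · exact logLogDensity_nonneg hd0.le hd1.le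
        · exact logAmplitude_sq_mul_one_sub_log_pow_le hk hx hx1

end

section

variable {α : Type*} [MeasurableSpace α] {μ : Measure α} [SFinite μ]

lemma setLIntegral_prod_lt_top_of_symm_of_le [LinearOrder α] {s : Set α} (hs : MeasurableSet s)
    {f Φ : α → α → ℝ} (hsymm : ∀ x y, f x y = f y x) (hdiag : ∀ x, f x x = 0)
    (hΦ : Integrable (Function.uncurry Φ) (μ.prod μ)) (hΦ0 : ∀ x y, 0 ≤ Φ x y)
    (hle : ∀ x ∈ s, ∀ y ∈ s, x < y → f x y ≤ Φ x y) :
    ∫⁻ p in s ×ˢ s, ENNReal.ofReal (f p.1 p.2) ∂μ.prod μ < ⊤ := by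
  have hsum : ∀ p ∈ s ×ˢ s, f p.1 p.2 ≤ Φ p.1 p.2 + Φ p.2 p.1 := by
    rintro ⟨x, y⟩ ⟨hx, hy⟩
    rcases lt_trichotomy x y with hxy | rfl | hyx
    · exact (hle x hx y hy hxy).trans (le_add_of_nonneg_right (hΦ0 y x))
    · exact (hdiag x).trans_le (add_nonneg (hΦ0 x x) (hΦ0 x x))
    · exact (hsymm x y).trans_le
        ((hle y hy x hx hyx).trans (le_add_of_nonneg_left (hΦ0 x y)))
  calc ∫⁻ p in s ×ˢ s, ENNReal.ofReal (f p.1 p.2) ∂μ.prod μ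
      ≤ ∫⁻ p in s ×ˢ s, ENNReal.ofReal (Φ p.1 p.2 + Φ p.2 p.1) ∂μ.prod μ :=
        setLIntegral_mono' (hs.prod hs) fun p hp => ENNReal.ofReal_le_ofReal (hsum p hp)
    _ ≤ ∫⁻ p, ENNReal.ofReal (Φ p.1 p.2 + Φ p.2 p.1) ∂μ.prod μ := setLIntegral_le_lintegral _ _
    _ < ⊤ := (hΦ.add hΦ.swap).lintegral_lt_top

lemma integrable_indicator_mul_indicator_sub [AddGroup α] [MeasurableAdd₂ α] [MeasurableNeg α]
    [μ.IsAddRightInvariant] {s t : Set α} (hs : MeasurableSet s) (ht : MeasurableSet t)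
    {a b : α → ℝ} (ha : IntegrableOn a s μ) (hb : IntegrableOn b t μ) :
    Integrable (fun p : α × α => s.indicator a p.1 * t.indicator b (p.2 - p.1)) (μ.prod μ) :=
  ((ha.integrable_indicator hs).convolution_integrand (ContinuousLinearMap.mul ℝ ℝ)
    (hb.integrable_indicator ht)).swap

end

theorem stmt18_general {k : ℕ} (hk : 3 ≤ k) {φ : ℝ → ℝ} {B : ℝ} {K : NNReal}
    (hφ : ∀ u, |φ u| ≤ B) (hφK : LipschitzWith K φ) (g : ℝ → ℝ)
    (hg : ∀ x, 0 < x → x < 1 →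
      g x = (Real.sqrt x)⁻¹ * ((1 + Real.log (2 / x)) ^ k)⁻¹ * φ (1 / x)) :
    ∫⁻ p in (Set.Ioo (0 : ℝ) 1) ×ˢ (Set.Ioo (0 : ℝ) 1),
        ENNReal.ofReal ((g p.1 - g p.2) ^ 2 * |p.1 - p.2|⁻¹ *
          (Real.log |Real.log (1 / |p.1 - p.2|)|) ^ 2) < ⊤ := by
  have hgA : ∀ x ∈ Ioo (0 : ℝ) 1, g x = logAmplitude k x * φ (1 / x) := fun x hx => by
    rw [hg x hx.1 hx.2, logAmplitude, ← inv_div x 2, Real.log_inv, ← sub_eq_add_neg]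
  let a := (Ioo (0 : ℝ) 1).indicator logDensity
  let b := (Ioo (0 : ℝ) 1).indicator logLogDensity
  let C := 6 ^ 3 * oscillationConst k B K ^ 2
  have ha : ∀ x, 0 ≤ a x := indicator_nonneg fun t ht => logDensity_nonneg ht.1.le
  have hb : ∀ d, 0 ≤ b d := indicator_nonneg fun t ht => logLogDensity_nonneg ht.1.le ht.2.le
  have hab : Integrable (fun p : ℝ × ℝ => C * (a p.1 * b (p.2 - p.1))) :=
    (integrable_indicator_mul_indicator_sub measurableSet_Ioo measurableSet_Ioo
      integrableOn_logDensity integrableOn_logLogDensity).const_mul C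
  refine setLIntegral_prod_lt_top_of_symm_of_le (Φ := fun x y => C * (a x * b (y - x)))
    (f := fun x y => (g x - g y) ^ 2 * |x - y|⁻¹ * Real.log |Real.log (1 / |x - y|)| ^ 2)
    measurableSet_Ioo (fun x y => by rw [sub_sq_comm, abs_sub_comm]) (fun x => by simp) hab
    (fun x y => mul_nonneg (by positivity) (mul_nonneg (ha x) (hb (y - x))))
    fun x hx y hy hxy => ?_
  have hd : y - x ∈ Ioo (0 : ℝ) 1 := ⟨by linarith, by linarith [hx.1, hy.2]⟩
  simp only [a, b, hgA x hx, hgA y hy, sub_sq_comm (logAmplitude k x * _), abs_sub_comm x,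
    abs_of_pos hd.1, indicator_of_mem hx, indicator_of_mem hd]
  exact integrand_le_logDensity_mul_logLogDensity hk hφ hφK hx.1 hxy hy.2

/-- The double integral
`∫₀¹∫₀¹ [g(x)-g(y)]² |x-y|⁻¹ (log|log(1/|x-y|)|)² dx dy` is finite for
`g(x) = x^{-1/2} (1 + log(2/x))^{-4} sin(1/x)`. -/
theorem stmt18 (g : ℝ → ℝ)
    (hg : ∀ x, 0 < x → x < 1 →
      g x = (Real.sqrt x)⁻¹ * ((1 + Real.log (2 / x)) ^ 4)⁻¹ * Real.sin (1 / x)) :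
    ∫⁻ p in (Set.Ioo (0 : ℝ) 1) ×ˢ (Set.Ioo (0 : ℝ) 1),
        ENNReal.ofReal ((g p.1 - g p.2) ^ 2 * |p.1 - p.2|⁻¹ *
          (Real.log |Real.log (1 / |p.1 - p.2|)|) ^ 2) < ⊤ :=
  stmt18_general (by norm_num) Real.abs_sin_le_one Real.lipschitzWith_sin g hg
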